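/- arXiv:2401.04895 — 3 statements merged into one kernel-verified Lean document; each statement's English description precedes it below -/
import Mathlib

section
/- Fix an integer n ≥ 1. Let Ω ∈ τ_s(ℍ_s^n) be self-stem-preserving. Then (𝒮ℛ(Ω), +, *) is an associative unitary real algebra; explicitly, for all f, g, h ∈ 𝒮ℛ(Ω) and a ∈ ℝ: (i) f + g ∈ 𝒮ℛ(Ω) and f*g ∈ 𝒮ℛ(Ω); (ii) (f*g)*h = f*(g*h); (iii) the constant function 1 satisfies 1*f = f*1 = f; (iv) f*(g + h) = f*g + f*h and (f + g)*h = f*h + g*h; (v) (a·f)*g = a·(f*g) = f*(a·g). -/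
open scoped ENNReal NNReal

noncomputable section

/-- The real quaternions. -/
abbrev ℍ := Quaternion ℝ

/-- The set `𝕊` of imaginary units of the quaternions. -/
def QS : Set ℍ := {I | I ^ 2 = -1}

/-- `Ψ_i^I : ℂ^n → ℂ_I^n ⊆ ℍ^n`, sending `x + y i` to `x + y I` componentwise. -/
def PsiI (n : ℕ) (I : ℍ) (z : Fin n → ℂ) : Fin n → ℍ :=
  fun ℓ => algebraMap ℝ ℍ (z ℓ).re + (z ℓ).im • I

/-- The slice `ℂ_I^n = (ℝ + ℝ I)^n ⊆ ℍ^n`. -/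
def sliceCn (n : ℕ) (I : ℍ) : Set (Fin n → ℍ) := Set.range (PsiI n I)

/-- The weakly slice cone `ℍ_s^n = ⋃_{I ∈ 𝕊} ℂ_I^n`. -/
def weakSliceCone (n : ℕ) : Set (Fin n → ℍ) := ⋃ I ∈ QS, sliceCn n I

/-- `Ω` is slice open (i.e. `Ω ∈ τ_s(ℍ_s^n)`): `Ω ⊆ ℍ_s^n` and each slice
`Ω_I = Ω ∩ ℂ_I^n` is open in `ℂ_I^n`, encoded via the homeomorphism `Ψ_i^I`. -/
def sliceOpen (n : ℕ) (Ω : Set (Fin n → ℍ)) : Prop :=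
  Ω ⊆ weakSliceCone n ∧ ∀ I ∈ QS, IsOpen (PsiI n I ⁻¹' Ω)

/-- The set `𝒫(ℂ^n)` of continuous paths `[0,1] → ℂ^n` with real start point,
encoded as functions `ℝ → ℂ^n` continuous on `[0,1]`. -/
def PathsC (n : ℕ) : Set (ℝ → Fin n → ℂ) :=
  {γ | ContinuousOn γ (Set.Icc 0 1) ∧ ∀ ℓ, (γ 0 ℓ).im = 0}

/-- `γ^I([0,1]) ⊆ Ω`. -/
def pathInSlice (n : ℕ) (Ω : Set (Fin n → ℍ)) (I : ℍ) (γ : ℝ → Fin n → ℂ) : Prop :=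
  ∀ t ∈ Set.Icc (0 : ℝ) 1, PsiI n I (γ t) ∈ Ω

/-- The set `𝕊(Ω, γ) = {I ∈ 𝕊 : γ^I ⊆ Ω}`. -/
def sliceUnits (n : ℕ) (Ω : Set (Fin n → ℍ)) (γ : ℝ → Fin n → ℂ) : Set ℍ :=
  {I | I ∈ QS ∧ pathInSlice n Ω I γ}

/-- The set `𝒫(ℂ^n, Ω)`. -/
def PathsIn (n : ℕ) (Ω : Set (Fin n → ℍ)) : Set (ℝ → Fin n → ℂ) :=
  {γ | γ ∈ PathsC n ∧ ∃ I, I ∈ sliceUnits n Ω γ}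

/-- The straight segment `𝓛_z^w(t) = (1 - t)z + tw`. -/
def segPath (n : ℕ) (z w : Fin n → ℂ) : ℝ → Fin n → ℂ :=
  fun t => (1 - t) • z + t • w

/-- Concatenation of paths. -/
def concatP (n : ℕ) (γ δ : ℝ → Fin n → ℂ) : ℝ → Fin n → ℂ :=
  fun t => if t ≤ 1 / 2 then γ (2 * t) else δ (2 * t - 1)

/-- `𝓛_γ(z) := γ ∘ 𝓛_{γ(1)}^z`, the extension of `γ` by the segment from `γ(1)` to `z`. -/
def extendPath (n : ℕ) (γ : ℝ → Fin n → ℂ) (z : Fin n → ℂ) : ℝ → Fin n → ℂ :=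
  concatP n γ (segPath n (γ 1) z)

/-- The ball `B_{𝒫(ℂ^n)}(γ, r)` in path space. -/
def pathBall (n : ℕ) (γ : ℝ → Fin n → ℂ) (r : ℝ) : Set (ℝ → Fin n → ℂ) :=
  {β | ∃ z ∈ Metric.ball (γ 1) r, β = extendPath n γ z}

/-- `B_I(c^I, r) ⊆ Ω_I`, encoded via `Ψ_i^I`. -/
def ballInSlice (n : ℕ) (Ω : Set (Fin n → ℍ)) (I : ℍ) (c : Fin n → ℂ) (r : ℝ) : Prop :=
  ∀ w ∈ Metric.ball c r, PsiI n I w ∈ Ω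

/-- `r_{γ,Ω}`, as an extended nonnegative real. -/
def rPath (n : ℕ) (Ω : Set (Fin n → ℍ)) (γ : ℝ → Fin n → ℂ) : ℝ≥0∞ :=
  sSup {x : ℝ≥0∞ | ∃ r : ℝ≥0, x = r ∧ pathBall n γ r ⊆ PathsIn n Ω}

/-- `r^{𝕊'}_{γ,Ω}`, as an extended nonnegative real. -/
def rSliceSet (n : ℕ) (Ω : Set (Fin n → ℍ)) (γ : ℝ → Fin n → ℂ) (S' : Set ℍ) : ℝ≥0∞ :=
  sSup {x : ℝ≥0∞ | ∃ r : ℝ≥0, x = r ∧ ∀ I ∈ S', ballInSlice n Ω I (γ 1) r}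

/-- `r²_{γ,Ω}`, as an extended nonnegative real. -/
def r2Slice (n : ℕ) (Ω : Set (Fin n → ℍ)) (γ : ℝ → Fin n → ℂ) : ℝ≥0∞ :=
  sSup {x : ℝ≥0∞ | ∃ S'' : Set ℍ, S'' ⊆ sliceUnits n Ω γ ∧ S''.Nontrivial ∧ x = rSliceSet n Ω γ S''}

/-- `r^I_{γ,Ω}`, as an extended nonnegative real. -/
def rISlice (n : ℕ) (Ω : Set (Fin n → ℍ)) (γ : ℝ → Fin n → ℂ) (I : ℍ) : ℝ≥0∞ :=
  sSup {x : ℝ≥0∞ | ∃ r : ℝ≥0, x = r ∧ ballInSlice n Ω I (γ 1) r}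

/-- `Ω` is real-path-connected. -/
def realPathConnected (n : ℕ) (Ω : Set (Fin n → ℍ)) : Prop :=
  ∀ q ∈ Ω, ∃ γ ∈ PathsIn n Ω, ∃ I ∈ sliceUnits n Ω γ, PsiI n I (γ 1) = q

/-- `Ω₂` is `Ω₁`-stem-preserving. -/
def stemPreserving (n : ℕ) (Ω₁ Ω₂ : Set (Fin n → ℍ)) : Prop :=
  (∀ γ ∈ PathsIn n Ω₁, (sliceUnits n Ω₂ γ).Nontrivial) ∧
  (∀ α ∈ PathsIn n Ω₁, ∀ β ∈ PathsIn n Ω₁, α 1 = β 1 →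
    ¬ ∃ I, sliceUnits n Ω₂ α ∩ sliceUnits n Ω₂ β = {I})

/-- `F : 𝒫(ℂ^n, Ω) → ℍ^{2×1}` is a (path-slice) stem function of `f`:
`f(γ^I(1)) = (1, I)·F(γ)`. -/
def isStemOf (n : ℕ) (Ω : Set (Fin n → ℍ)) (f : (Fin n → ℍ) → ℍ)
    (F : (ℝ → Fin n → ℂ) → ℍ × ℍ) : Prop :=
  ∀ γ ∈ PathsIn n Ω, ∀ I ∈ sliceUnits n Ω γ, f (PsiI n I (γ 1)) = (F γ).1 + I * (F γ).2

/-- `f` is a path-slice function on `Ω`. -/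
def PathSliceFn (n : ℕ) (Ω : Set (Fin n → ℍ)) (f : (Fin n → ℍ) → ℍ) : Prop :=
  ∃ F, isStemOf n Ω f F

/-- `f` is (weakly) slice regular on `Ω`: each restriction `f_I` is real differentiable
and satisfies the Cauchy-Riemann equations `(∂/∂x_ℓ + I ∂/∂y_ℓ) f_I = 0`. -/
def SliceRegular (n : ℕ) (Ω : Set (Fin n → ℍ)) (f : (Fin n → ℍ) → ℍ) : Prop :=
  ∀ I ∈ QS,
    DifferentiableOn ℝ (fun z => f (PsiI n I z)) (PsiI n I ⁻¹' Ω) ∧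
    ∀ z ∈ PsiI n I ⁻¹' Ω, ∀ ℓ : Fin n,
      fderivWithin ℝ (fun z => f (PsiI n I z)) (PsiI n I ⁻¹' Ω) z (Pi.single ℓ 1)
        + I * fderivWithin ℝ (fun z => f (PsiI n I z)) (PsiI n I ⁻¹' Ω) z
            (Pi.single ℓ Complex.I) = 0

open Classical in
/-- `F_{Ω₁}^f` : a choice of stem function of the path-slice function `f : Ω₂ → ℍ`
(its restriction to `𝒫(ℂ^n, Ω₁)` is independent of the choice). -/
def stemF (n : ℕ) (Ω₂ : Set (Fin n → ℍ)) (f : (Fin n → ℍ) → ℍ) :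
    (ℝ → Fin n → ℂ) → ℍ × ℍ :=
  if h : ∃ F, isStemOf n Ω₂ f F then h.choose else fun _ => 0

open Classical in
/-- The map `ℑ : ℍ_s^n → 𝕊 ∪ {0}`. -/
def scrI {n : ℕ} (q : Fin n → ℍ) : ℍ :=
  if h : (Finset.univ.filter fun ℓ : Fin n => Quaternion.im (q ℓ) ≠ 0).Nonempty then
    ‖Quaternion.im (q ((Finset.univ.filter
        fun ℓ : Fin n => Quaternion.im (q ℓ) ≠ 0).min' h))‖⁻¹ •
      Quaternion.im (q ((Finset.univ.filter
        fun ℓ : Fin n => Quaternion.im (q ℓ) ≠ 0).min' h))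
  else 0

open Classical in
/-- The map `ℱ_{Ω₁}^g : Ω₁ → ℍ^{2×1}`. -/
def scrF (n : ℕ) (Ω₁ Ω₂ : Set (Fin n → ℍ)) (g : (Fin n → ℍ) → ℍ) (q : Fin n → ℍ) :
    ℍ × ℍ :=
  if h : (∃ ℓ, Quaternion.im (q ℓ) ≠ 0) ∧
      ∃ γ, γ ∈ PathsIn n Ω₁ ∧ pathInSlice n Ω₁ (scrI q) γ ∧ PsiI n (scrI q) (γ 1) = q then
    stemF n Ω₂ g h.2.choose
  else (g q, 0)

/-- The `*`-product `(f*g)(q) = (f(q), ℑ(q)f(q))·ℱ_{Ω₁}^g(q)`. -/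
def starProd (n : ℕ) (Ω₁ Ω₂ : Set (Fin n → ℍ)) (f g : (Fin n → ℍ) → ℍ) :
    (Fin n → ℍ) → ℍ :=
  fun q => f q * (scrF n Ω₁ Ω₂ g q).1 + scrI q * f q * (scrF n Ω₁ Ω₂ g q).2

/-- Componentwise complex conjugate of a path. -/
def conjPath (n : ℕ) (γ : ℝ → Fin n → ℂ) : ℝ → Fin n → ℂ :=
  fun t ℓ => starRingEnd ℂ (γ t ℓ)

end

/-!
A pair `(a, b) ∈ ℍ × ℍ` is read as the stem `a + i b ∈ ℍ ⊗ ℂ`, and for `I ∈ 𝕊` stems act on `ℍ`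
from the right by `x · (a, b) = x a + I x b`. This is an action because `I² = -1`. If `g` has the
stem function `G`, then `(f * g)(γ^I(1)) = f(γ^I(1)) · G(γ)`: the `*`-product with `g` is the action
of its stem, and all algebraic laws become those of an action of the algebra `ℍ ⊗ ℂ`.

The action is bilinear over the complex structures "left multiplication by `I`" on `ℍ` and
"multiplication by `i`" on stems, so `f * g` is regular once the stems of `g` depend holomorphically
on the end point of the path. They do, since a stem is determined by the values on two slices.

That regular functions have stem functions is the identity theorem: the value on a third slice and
the one predicted by two slices agree at real points, hence along every path starting at a real
point. For maps into a real normed space with complex structure `J`, the identity theorem is reduced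
to complex-valued functions by the functionals `φ - i φ ∘ J`.
-/

noncomputable section

open Filter Topology

section Holomorphy

variable {V E F G ι : Type*} [NormedAddCommGroup V] [NormedSpace ℂ V]
  [NormedAddCommGroup E] [NormedSpace ℝ E] [NormedAddCommGroup F] [NormedSpace ℝ F]
  [NormedAddCommGroup G] [NormedSpace ℝ G]

/-- Holomorphy at `z` of a map into a real normed space `E` on which the operator `J` plays the
role of multiplication by `i`: the real derivative at `z` turns `i` into `J`. The condition
`J ∘ J = -1` is not part of the definition. -/
def IsHolomorphicAt (J : E →L[ℝ] E) (u : V → E) (z : V) : Prop :=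
  ∃ L : V →L[ℝ] E, HasFDerivAt u L z ∧ ∀ v, L (Complex.I • v) = J (L v)

namespace IsHolomorphicAt

variable {J : E →L[ℝ] E} {K : F →L[ℝ] F} {u v : V → E} {w : V → F} {z : V}

lemma congr_of_eventuallyEq (hu : IsHolomorphicAt J u z) (h : v =ᶠ[𝓝 z] u) :
    IsHolomorphicAt J v z := by
  obtain ⟨L, hL, hLJ⟩ := hu
  exact ⟨L, hL.congr_of_eventuallyEq h, hLJ⟩

lemma add (hu : IsHolomorphicAt J u z) (hv : IsHolomorphicAt J v z) :
    IsHolomorphicAt J (fun x => u x + v x) z := by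
  obtain ⟨L, hL, hLJ⟩ := hu
  obtain ⟨M, hM, hMJ⟩ := hv
  exact ⟨L + M, hL.add hM, fun x => by simp [hLJ, hMJ]⟩

lemma sub (hu : IsHolomorphicAt J u z) (hv : IsHolomorphicAt J v z) :
    IsHolomorphicAt J (fun x => u x - v x) z := by
  obtain ⟨L, hL, hLJ⟩ := hu
  obtain ⟨M, hM, hMJ⟩ := hv
  exact ⟨L - M, hL.sub hM, fun x => by simp [hLJ, hMJ]⟩

lemma prodMk (hu : IsHolomorphicAt J u z) (hw : IsHolomorphicAt K w z) :
    IsHolomorphicAt (J.prodMap K) (fun x => (u x, w x)) z := by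
  obtain ⟨L, hL, hLJ⟩ := hu
  obtain ⟨M, hM, hMK⟩ := hw
  exact ⟨L.prod M, hL.prodMk hM, fun x => by simp [hLJ, hMK]⟩

lemma clm_comp (hu : IsHolomorphicAt J u z) (T : E →L[ℝ] F) (hT : ∀ x, T (J x) = K (T x)) :
    IsHolomorphicAt K (fun x => T (u x)) z := by
  obtain ⟨L, hL, hLJ⟩ := hu
  exact ⟨T.comp L, T.hasFDerivAt.comp z hL, fun x => by simp [hLJ, hT]⟩

lemma clm_bilinear {M : G →L[ℝ] G} (B : E →L[ℝ] F →L[ℝ] G)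
    (hBJ : ∀ x y, B (J x) y = M (B x y)) (hBK : ∀ x y, B x (K y) = M (B x y))
    (hu : IsHolomorphicAt J u z) (hw : IsHolomorphicAt K w z) :
    IsHolomorphicAt M (fun x => B (u x) (w x)) z := by
  obtain ⟨L, hL, hLJ⟩ := hu
  obtain ⟨N, hN, hNK⟩ := hw
  exact ⟨_, B.hasFDerivAt_of_bilinear hL hN, fun x => by simp [hLJ, hNK, hBJ, hBK]⟩

lemma comp_line {a b : V} {t : ℂ} (hu : IsHolomorphicAt J u (a + t • b)) :
    IsHolomorphicAt J (fun s : ℂ => u (a + s • b)) t := by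
  obtain ⟨L, hL, hLJ⟩ := hu
  have hline : HasFDerivAt (fun s : ℂ => a + s • b)
      ((ContinuousLinearMap.toSpanSingleton ℂ b).restrictScalars ℝ) t :=
    (((ContinuousLinearMap.toSpanSingleton ℂ b).restrictScalars ℝ).hasFDerivAt).const_add a
  exact ⟨_, hL.comp t hline, fun c => by simp [mul_smul, hLJ]⟩

lemma differentiableAt_complex {H : Type*} [NormedAddCommGroup H] [NormedSpace ℂ H]
    {u : ℂ → H} {t : ℂ} (hu : IsHolomorphicAt (Complex.I • ContinuousLinearMap.id ℝ H) u t) :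
    DifferentiableAt ℂ u t := by
  obtain ⟨L, hL, hLI⟩ := hu
  refine differentiableAt_complex_iff_differentiableAt_real.2 ⟨hL.differentiableAt, ?_⟩
  rw [hL.fderiv]
  simpa using hLI 1

end IsHolomorphicAt

/-- The complex functional on `(E, J)` with real part `φ`. -/
def complexFunctional (J : E →L[ℝ] E) (φ : StrongDual ℝ E) : E →L[ℝ] ℂ :=
  Complex.ofRealCLM.comp φ - Complex.I • Complex.ofRealCLM.comp (φ.comp J)

lemma complexFunctional_apply (J : E →L[ℝ] E) (φ : StrongDual ℝ E) (x : E) :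
    complexFunctional J φ x = φ x - Complex.I * φ (J x) := by
  simp [complexFunctional]

lemma complexFunctional_map {J : E →L[ℝ] E} (hJ : ∀ x, J (J x) = -x) (φ : StrongDual ℝ E)
    (x : E) : complexFunctional J φ (J x) = Complex.I • complexFunctional J φ x := by
  simp only [complexFunctional_apply, hJ, map_neg, Complex.ofReal_neg, smul_eq_mul]
  linear_combination (φ (J x) : ℂ) * Complex.I_mul_I

lemma eq_zero_of_forall_complexFunctional_eq_zero {J : E →L[ℝ] E} {x : E}
    (h : ∀ φ, complexFunctional J φ x = 0) : x = 0 :=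
  SeparatingDual.eq_zero_of_forall_dual_eq_zero (R := ℝ) fun φ => by
    simpa [complexFunctional_apply] using congrArg Complex.re (h φ)

namespace IsHolomorphicAt

variable {J : E →L[ℝ] E}

theorem eqOn_zero_of_preconnected_of_frequently_eq_zero (hJ : ∀ x, J (J x) = -x) {U : Set ℂ}
    (hU : IsOpen U) (hUc : IsPreconnected U) {u : ℂ → E} (hu : ∀ z ∈ U, IsHolomorphicAt J u z)
    {z₀ : ℂ} (hz₀ : z₀ ∈ U) (hfreq : ∃ᶠ z in 𝓝[≠] z₀, u z = 0) : Set.EqOn u 0 U := by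
  refine fun z hz => eq_zero_of_forall_complexFunctional_eq_zero (J := J) fun φ => ?_
  have hdiff : DifferentiableOn ℂ (fun z => complexFunctional J φ (u z)) U := fun z hz =>
    ((hu z hz).clm_comp _ (complexFunctional_map hJ φ)).differentiableAt_complex
      |>.differentiableWithinAt
  exact (hdiff.analyticOnNhd hU).eqOn_zero_of_preconnected_of_frequently_eq_zero hUc hz₀
    (hfreq.mono fun z hz => by simp [hz]) hz

lemma eq_zero_of_frequently_eq_zero_on_line (hJ : ∀ x, J (J x) = -x) {U : Set V}
    (hU : IsOpen U) (hUc : Convex ℝ U) {u : V → E} (hu : ∀ z ∈ U, IsHolomorphicAt J u z)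
    {a b : V} (ha : a ∈ U) (hfreq : ∃ᶠ t in 𝓝[≠] (0 : ℂ), u (a + t • b) = 0)
    {c : ℂ} (hc : a + c • b ∈ U) : u (a + c • b) = 0 := by
  have hconvex : Convex ℝ {t : ℂ | a + t • b ∈ U} :=
    (hUc.translate_preimage_right a).linear_preimage
      ((LinearMap.toSpanSingleton ℂ V b).restrictScalars ℝ)
  have hopen : IsOpen {t : ℂ | a + t • b ∈ U} := hU.preimage (by fun_prop)
  exact eqOn_zero_of_preconnected_of_frequently_eq_zero hJ hopen hconvex.isPreconnected
    (u := fun t => u (a + t • b)) (fun t ht => (hu _ ht).comp_line) (by simpa using ha) hfreq hc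

theorem eqOn_zero_of_preconnected_of_eventuallyEq_zero (hJ : ∀ x, J (J x) = -x) {U : Set V}
    (hU : IsOpen U) (hUc : IsPreconnected U) {u : V → E} (hu : ∀ z ∈ U, IsHolomorphicAt J u z)
    {z₀ : V} (hz₀ : z₀ ∈ U) (hzero : u =ᶠ[𝓝 z₀] 0) : Set.EqOn u 0 U := by
  suffices U ⊆ {z | u =ᶠ[𝓝 z] 0} from fun z hz => (this hz).self_of_nhds
  refine hUc.subset_of_closure_inter_subset isOpen_setOfPred_eventually_nhds
    ⟨z₀, hz₀, hzero⟩ ?_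
  rintro z ⟨hzcl, hzU⟩
  obtain ⟨r, hr, hball⟩ := Metric.isOpen_iff.1 hU z hzU
  obtain ⟨a, ha, hazero⟩ := mem_closure_iff.1 hzcl _ Metric.isOpen_ball (Metric.mem_ball_self hr)
  filter_upwards [Metric.ball_mem_nhds z hr] with w hw
  have hline : Tendsto (fun t : ℂ => a + t • (w - a)) (𝓝[≠] 0) (𝓝 a) := by
    have : Continuous fun t : ℂ => a + t • (w - a) := by fun_prop
    simpa using (this.tendsto 0).mono_left nhdsWithin_le_nhds
  simpa using eq_zero_of_frequently_eq_zero_on_line hJ Metric.isOpen_ball (convex_ball z r)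
    (fun x hx => hu x (hball hx)) ha (hline.eventually hazero).frequently
    (c := 1) (by simpa using hw)

variable [Fintype ι]

/-- Near a real point every `w = x + i y` lies on the complex line `t ↦ x + t y`, whose real
points are real. -/
theorem eventuallyEq_zero_of_real (hJ : ∀ x, J (J x) = -x) {U : Set (ι → ℂ)} (hU : IsOpen U)
    {u : (ι → ℂ) → E} (hu : ∀ z ∈ U, IsHolomorphicAt J u z)
    (hreal : ∀ z ∈ U, (∀ ℓ, (z ℓ).im = 0) → u z = 0)
    {z₀ : ι → ℂ} (hz₀ : z₀ ∈ U) (hz₀real : ∀ ℓ, (z₀ ℓ).im = 0) : u =ᶠ[𝓝 z₀] 0 := by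
  obtain ⟨r, hr, hball⟩ := Metric.isOpen_iff.1 hU z₀ hz₀
  filter_upwards [Metric.ball_mem_nhds z₀ hr] with w hw
  let x : ι → ℂ := fun ℓ => (w ℓ).re
  let y : ι → ℂ := fun ℓ => (w ℓ).im
  have hwxy : x + Complex.I • y = w := by
    ext ℓ
    simpa [x, y, mul_comm] using Complex.re_add_im (w ℓ)
  have hx : x ∈ Metric.ball z₀ r := by
    rw [Metric.mem_ball, dist_pi_lt_iff hr] at hw ⊢
    intro ℓ
    have hre : x ℓ - z₀ ℓ = ((w ℓ - z₀ ℓ).re : ℂ) := by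
      apply Complex.ext <;> simp [x, hz₀real ℓ]
    refine lt_of_le_of_lt ?_ (hw ℓ)
    rw [dist_eq_norm, dist_eq_norm, hre, Complex.norm_real]
    exact Complex.abs_re_le_norm _
  have hfreq : ∃ᶠ t in 𝓝[≠] (0 : ℂ), u (x + t • y) = 0 := by
    have hofReal : Tendsto (fun s : ℝ => (s : ℂ)) (𝓝[≠] 0) (𝓝[≠] 0) := by
      simpa using Complex.continuous_ofReal.continuousAt.continuousWithinAt.tendsto_nhdsWithin
        (x := 0) (s := {0}ᶜ) (t := {0}ᶜ) fun s hs => by simpa using hs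
    have hline : Tendsto (fun t : ℂ => x + t • y) (𝓝[≠] 0) (𝓝 x) := by
      have : Continuous fun t : ℂ => x + t • y := by fun_prop
      simpa using (this.tendsto 0).mono_left nhdsWithin_le_nhds
    refine hofReal.frequently (Eventually.frequently ?_)
    filter_upwards [(hline.comp hofReal).eventually (Metric.isOpen_ball.mem_nhds hx)] with s hs
    exact hreal _ (hball hs) fun ℓ => by simp [x, y]
  rw [← hwxy] at hw ⊢
  exact eq_zero_of_frequently_eq_zero_on_line hJ Metric.isOpen_ball (convex_ball z₀ r)
    (fun z hz => hu z (hball hz)) hx hfreq hw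

theorem eq_at_path_end_of_eq_on_real {n : ℕ} (hJ : ∀ x, J (J x) = -x) {U : Set (Fin n → ℂ)}
    (hU : IsOpen U) {u v : (Fin n → ℂ) → E} (hu : ∀ z ∈ U, IsHolomorphicAt J u z)
    (hv : ∀ z ∈ U, IsHolomorphicAt J v z)
    (hreal : ∀ z ∈ U, (∀ ℓ, (z ℓ).im = 0) → u z = v z)
    {γ : ℝ → Fin n → ℂ} (hγ : γ ∈ PathsC n) (hγU : ∀ t ∈ Set.Icc (0 : ℝ) 1, γ t ∈ U) :
    u (γ 1) = v (γ 1) := by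
  have h0 : (0 : ℝ) ∈ Set.Icc (0 : ℝ) 1 := Set.left_mem_Icc.2 zero_le_one
  have h1 : (1 : ℝ) ∈ Set.Icc (0 : ℝ) 1 := Set.right_mem_Icc.2 zero_le_one
  have hd : ∀ z ∈ U, IsHolomorphicAt J (fun z => u z - v z) z :=
    fun z hz => (hu z hz).sub (hv z hz)
  have hmem : γ 1 ∈ connectedComponentIn U (γ 0) :=
    (isPreconnected_Icc.image γ hγ.1).subset_connectedComponentIn (Set.mem_image_of_mem γ h0)
      (Set.image_subset_iff.2 hγU) (Set.mem_image_of_mem γ h1)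
  refine sub_eq_zero.1 (eqOn_zero_of_preconnected_of_eventuallyEq_zero hJ hU.connectedComponentIn
    isPreconnected_connectedComponentIn (fun z hz => hd z (connectedComponentIn_subset _ _ hz))
    (mem_connectedComponentIn (hγU 0 h0)) ?_ hmem)
  exact eventuallyEq_zero_of_real hJ hU hd (fun z hz hzreal => sub_eq_zero.2 (hreal z hz hzreal))
    (hγU 0 h0) hγ.2

end IsHolomorphicAt

end Holomorphy

section ImaginaryUnits

variable {n : ℕ} {I : ℍ}

lemma mul_self_of_mem_QS (hI : I ∈ QS) : I * I = -1 :=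
  (pow_two I).symm.trans hI

lemma neg_mem_QS (hI : I ∈ QS) : -I ∈ QS :=
  (neg_sq I).trans hI

lemma norm_of_mem_QS (hI : I ∈ QS) : ‖I‖ = 1 := by
  have h : ‖I‖ * ‖I‖ = 1 := by rw [← norm_mul, mul_self_of_mem_QS hI, norm_neg, norm_one]
  nlinarith [norm_nonneg I]

lemma ne_zero_of_mem_QS (hI : I ∈ QS) : I ≠ 0 :=
  norm_ne_zero_iff.1 (by simp [norm_of_mem_QS hI])

lemma re_of_mem_QS (hI : I ∈ QS) : I.re = 0 := by
  rw [← Quaternion.sq_eq_neg_normSq, Quaternion.normSq_eq_norm_mul_self, norm_of_mem_QS hI,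
    mul_one, Quaternion.coe_one]
  exact hI

lemma im_PsiI (hI : I ∈ QS) (z : Fin n → ℂ) (ℓ : Fin n) :
    Quaternion.im (PsiI n I z ℓ) = (z ℓ).im • I := by
  ext <;> simp [PsiI, re_of_mem_QS hI, Quaternion.algebraMap_def]

lemma exists_im_PsiI_ne_zero_iff (hI : I ∈ QS) (z : Fin n → ℂ) :
    (∃ ℓ, Quaternion.im (PsiI n I z ℓ) ≠ 0) ↔ ∃ ℓ, (z ℓ).im ≠ 0 := by
  simp [im_PsiI hI, ne_zero_of_mem_QS hI]

lemma PsiI_injective (hI : I ∈ QS) : Function.Injective (PsiI n I) := by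
  intro z w h
  ext1 ℓ
  have him : (z ℓ).im = (w ℓ).im := by
    refine smul_left_injective ℝ (ne_zero_of_mem_QS hI) ?_
    simp only [← im_PsiI hI, h]
  have hre : (z ℓ).re = (w ℓ).re := by
    have hℓ := congrFun h ℓ
    simp only [PsiI, him] at hℓ
    exact (algebraMap ℝ ℍ).injective (add_right_cancel hℓ)
  exact Complex.ext hre him

lemma PsiI_eq_of_real {z : Fin n → ℂ} (hz : ∀ ℓ, (z ℓ).im = 0) (I J : ℍ) :
    PsiI n I z = PsiI n J z := by
  ext1 ℓ
  simp [PsiI, hz ℓ]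

lemma inv_norm_smul_smul_eq_or_eq_neg (hI : I ∈ QS) {y : ℝ} (hy : y ≠ 0) :
    ‖y • I‖⁻¹ • y • I = I ∨ ‖y • I‖⁻¹ • y • I = -I := by
  rw [norm_smul, norm_of_mem_QS hI, mul_one, Real.norm_eq_abs, smul_smul]
  rcases abs_choice y with h | h <;> rw [h]
  · exact .inl (by rw [inv_mul_cancel₀ hy, one_smul])
  · exact .inr (by rw [inv_neg, neg_mul, inv_mul_cancel₀ hy, neg_one_smul])

lemma scrI_PsiI (hI : I ∈ QS) {z : Fin n → ℂ} (hz : ∃ ℓ, (z ℓ).im ≠ 0) :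
    scrI (PsiI n I z) = I ∨ scrI (PsiI n I z) = -I := by
  classical
  have hne : (Finset.univ.filter fun ℓ : Fin n =>
      Quaternion.im (PsiI n I z ℓ) ≠ 0).Nonempty := by
    simpa [Finset.filter_nonempty_iff] using (exists_im_PsiI_ne_zero_iff hI z).2 hz
  have hmin := (Finset.mem_filter.1 (Finset.min'_mem _ hne)).2
  rw [scrI, dif_pos hne]
  rw [im_PsiI hI] at hmin ⊢
  exact inv_norm_smul_smul_eq_or_eq_neg hI (left_ne_zero_of_smul hmin)

lemma eq_or_eq_neg_of_PsiI_eq {J : ℍ} (hI : I ∈ QS) (hJ : J ∈ QS) {z w : Fin n → ℂ}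
    (hz : ∃ ℓ, (z ℓ).im ≠ 0) (h : PsiI n J w = PsiI n I z) : J = I ∨ J = -I := by
  have hw : ∃ ℓ, (w ℓ).im ≠ 0 := by
    rwa [← exists_im_PsiI_ne_zero_iff hJ, h, exists_im_PsiI_ne_zero_iff hI]
  have hIz := scrI_PsiI hI hz
  have hJw := scrI_PsiI hJ hw
  rw [h] at hJw
  grind

end ImaginaryUnits

section Paths

variable {n : ℕ} {Ω : Set (Fin n → ℍ)} {γ : ℝ → Fin n → ℂ} {I : ℍ}

lemma PsiI_neg_conjPath (I : ℍ) (γ : ℝ → Fin n → ℂ) (t : ℝ) :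
    PsiI n (-I) (conjPath n γ t) = PsiI n I (γ t) := by
  ext1 ℓ
  simp [PsiI, conjPath]

lemma conjPath_mem_PathsC (hγ : γ ∈ PathsC n) : conjPath n γ ∈ PathsC n :=
  ⟨continuousOn_pi.2 fun ℓ => Complex.continuous_conj.comp_continuousOn (continuousOn_pi.1 hγ.1 ℓ),
    fun ℓ => by simp [conjPath, hγ.2 ℓ]⟩

lemma neg_mem_sliceUnits_conjPath_iff :
    -I ∈ sliceUnits n Ω (conjPath n γ) ↔ I ∈ sliceUnits n Ω γ := by
  have hQS : -I ∈ QS ↔ I ∈ QS := ⟨fun h => neg_neg I ▸ neg_mem_QS h, neg_mem_QS⟩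
  simp only [sliceUnits, pathInSlice, Set.mem_ofPred_eq, PsiI_neg_conjPath, hQS]

lemma conjPath_mem_PathsIn (hγ : γ ∈ PathsIn n Ω) : conjPath n γ ∈ PathsIn n Ω := by
  obtain ⟨hC, I, hI⟩ := hγ
  exact ⟨conjPath_mem_PathsC hC, -I, neg_mem_sliceUnits_conjPath_iff.2 hI⟩

lemma extendPath_of_le_half (z : Fin n → ℂ) {t : ℝ} (ht : t ≤ 1 / 2) :
    extendPath n γ z t = γ (2 * t) :=
  if_pos ht

lemma extendPath_of_half_le (z : Fin n → ℂ) {t : ℝ} (ht : 1 / 2 ≤ t) :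
    extendPath n γ z t = segPath n (γ 1) z (2 * t - 1) := by
  rcases ht.eq_or_lt with rfl | ht
  · rw [extendPath_of_le_half z le_rfl]
    norm_num [segPath]
  · exact if_neg ht.not_ge

lemma extendPath_one (γ : ℝ → Fin n → ℂ) (z : Fin n → ℂ) : extendPath n γ z 1 = z := by
  rw [extendPath_of_half_le z (by norm_num)]
  norm_num [segPath]

lemma extendPath_mem_PathsC (hγ : γ ∈ PathsC n) (z : Fin n → ℂ) :
    extendPath n γ z ∈ PathsC n := by
  refine ⟨?_, by simpa [extendPath_of_le_half] using hγ.2⟩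
  have hleft : ContinuousOn (extendPath n γ z) (Set.Icc 0 (1 / 2)) := by
    refine ContinuousOn.congr (hγ.1.comp (t := Set.Icc 0 1) (f := fun t => 2 * t) (by fun_prop) ?_)
      fun t ht => extendPath_of_le_half z ht.2
    exact fun t ht => ⟨by linarith [ht.1], by linarith [ht.2]⟩
  have hright : ContinuousOn (extendPath n γ z) (Set.Icc (1 / 2) 1) := by
    refine ContinuousOn.congr (f := fun t => segPath n (γ 1) z (2 * t - 1)) ?_
      fun t ht => extendPath_of_half_le z ht.1
    unfold segPath
    fun_prop
  rw [← Set.Icc_union_Icc_eq_Icc (b := 1 / 2) (by norm_num) (by norm_num)]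
  exact hleft.union_of_isClosed hright isClosed_Icc isClosed_Icc

lemma mem_sliceUnits_extendPath (hI : I ∈ sliceUnits n Ω γ) {z : Fin n → ℂ}
    (hz : ∀ w ∈ segment ℝ (γ 1) z, PsiI n I w ∈ Ω) : I ∈ sliceUnits n Ω (extendPath n γ z) := by
  refine ⟨hI.1, fun t ht => ?_⟩
  rcases le_total t (1 / 2) with h | h
  · rw [extendPath_of_le_half z h]
    exact hI.2 _ ⟨by linarith [ht.1], by linarith⟩
  · rw [extendPath_of_half_le z h]
    exact hz _ ⟨1 - (2 * t - 1), 2 * t - 1, by linarith [ht.2], by linarith, by ring, rfl⟩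

lemma PsiI_path_end_mem (hI : I ∈ sliceUnits n Ω γ) : PsiI n I (γ 1) ∈ Ω :=
  hI.2 1 (Set.right_mem_Icc.2 zero_le_one)

lemma eventually_mem_sliceUnits_extendPath (hΩ : sliceOpen n Ω) (hI : I ∈ sliceUnits n Ω γ) :
    ∀ᶠ z in 𝓝 (γ 1), I ∈ sliceUnits n Ω (extendPath n γ z) := by
  obtain ⟨r, hr, hball⟩ := Metric.isOpen_iff.1 (hΩ.2 I hI.1) _ (PsiI_path_end_mem hI)
  filter_upwards [Metric.ball_mem_nhds (γ 1) hr] with z hz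
  exact mem_sliceUnits_extendPath hI fun w hw =>
    hball ((convex_ball (γ 1) r).segment_subset (Metric.mem_ball_self hr) hz hw)

lemma realPathConnected.exists_path_to (hΩ : realPathConnected n Ω) (hI : I ∈ QS)
    {z : Fin n → ℂ} (hz : PsiI n I z ∈ Ω) :
    ∃ γ ∈ PathsIn n Ω, I ∈ sliceUnits n Ω γ ∧ γ 1 = z := by
  by_cases hreal : ∃ ℓ, (z ℓ).im ≠ 0
  · obtain ⟨γ, hγ, J, hJ, hend⟩ := hΩ _ hz
    rcases eq_or_eq_neg_of_PsiI_eq hI hJ.1 hreal hend with rfl | rfl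
    · exact ⟨γ, hγ, hJ, PsiI_injective hI hend⟩
    · refine ⟨conjPath n γ, conjPath_mem_PathsIn hγ, ?_, PsiI_injective hI ?_⟩
      · simpa using neg_mem_sliceUnits_conjPath_iff.2 hJ
      · rw [← hend, ← PsiI_neg_conjPath (-I), neg_neg]
  · push Not at hreal
    have hconst : I ∈ sliceUnits n Ω fun _ => z := ⟨hI, fun _ _ => hz⟩
    exact ⟨fun _ => z, ⟨⟨continuousOn_const, hreal⟩, I, hconst⟩, hconst, rfl⟩

end Paths

section Stem

variable {I J K : ℍ}

/-- The complex structure `(a, b) ↦ (-b, a)` on `ℍ × ℍ`, where `(a, b)` stands for the stem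
`a + i b ∈ ℍ ⊗ ℂ`. -/
def stemI : ℍ × ℍ →L[ℝ] ℍ × ℍ :=
  (-ContinuousLinearMap.snd ℝ ℍ ℍ).prod (ContinuousLinearMap.fst ℝ ℍ ℍ)

/-- The product of `ℍ ⊗ ℂ`, with stems `a + i b` encoded as pairs `(a, b)`. -/
def stemMul (p q : ℍ × ℍ) : ℍ × ℍ :=
  (p.1 * q.1 - p.2 * q.2, p.1 * q.2 + p.2 * q.1)

/-- The right action `(x, (a, b)) ↦ x a + I x b` of stems on `ℍ`. The orbit map of `1` is
`(1, I) · (a, b)ᵀ`, the value on the slice `ℂ_I` of a function with stem `(a, b)`; the action on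
`f q` with `I = ℑ q` is the `*`-product. -/
def stemAct (I : ℍ) : ℍ →L[ℝ] ℍ × ℍ →L[ℝ] ℍ :=
  (ContinuousLinearMap.mul ℝ ℍ).bilinearComp (.id ℝ ℍ) (.fst ℝ ℍ ℍ) +
    (ContinuousLinearMap.mul ℝ ℍ).bilinearComp (.mul ℝ ℍ I) (.snd ℝ ℍ ℍ)

lemma stemAct_apply (I x : ℍ) (p : ℍ × ℍ) : stemAct I x p = x * p.1 + I * x * p.2 := by
  simp [stemAct]

lemma stemAct_stemAct (hI : I ∈ QS) (x : ℍ) (p q : ℍ × ℍ) :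
    stemAct I (stemAct I x p) q = stemAct I x (stemMul p q) := by
  have hII : I * (I * x * p.2) = -(x * p.2) := by
    rw [← mul_assoc, ← mul_assoc, mul_self_of_mem_QS hI, neg_one_mul, neg_mul]
  simp only [stemAct_apply, stemMul, mul_add I, hII]
  noncomm_ring

lemma stemAct_mul_left (I x : ℍ) (p : ℍ × ℍ) :
    stemAct I (ContinuousLinearMap.mul ℝ ℍ I x) p =
      ContinuousLinearMap.mul ℝ ℍ I (stemAct I x p) := by
  simp [stemAct_apply, mul_add, mul_assoc]

lemma stemAct_stemI (hI : I ∈ QS) (x : ℍ) (p : ℍ × ℍ) :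
    stemAct I x (stemI p) = ContinuousLinearMap.mul ℝ ℍ I (stemAct I x p) := by
  simp [stemAct_apply, stemI, mul_add, ← mul_assoc, mul_self_of_mem_QS hI, add_comm]

/-- The stem `p` whose values `(1, J) · p` and `(1, K) · p` are prescribed, as a function of these
two values. Only meaningful for `J ≠ K`. -/
def stemSolve (J K : ℍ) : ℍ × ℍ →L[ℝ] ℍ × ℍ :=
  let D := (ContinuousLinearMap.mul ℝ ℍ (J - K)⁻¹).comp (.fst ℝ ℍ ℍ - .snd ℝ ℍ ℍ)
  (ContinuousLinearMap.fst ℝ ℍ ℍ - (ContinuousLinearMap.mul ℝ ℍ J).comp D).prod D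

lemma stemSolve_apply (J K : ℍ) (x : ℍ × ℍ) :
    stemSolve J K x =
      (x.1 - J * ((J - K)⁻¹ * (x.1 - x.2)), (J - K)⁻¹ * (x.1 - x.2)) :=
  rfl

lemma stemSolve_stemAct (hJK : J ≠ K) (p : ℍ × ℍ) :
    stemSolve J K (stemAct J 1 p, stemAct K 1 p) = p := by
  have hsub : stemAct J 1 p - stemAct K 1 p = (J - K) * p.2 := by
    simp only [stemAct_apply]
    noncomm_ring
  rw [stemSolve_apply, hsub, inv_mul_cancel_left₀ (sub_ne_zero.2 hJK)]
  simp [stemAct_apply]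

lemma stemAct_stemSolve_left (J K : ℍ) (x : ℍ × ℍ) : stemAct J 1 (stemSolve J K x) = x.1 := by
  simp [stemAct_apply, stemSolve_apply]

lemma stemAct_stemSolve_right (hJK : J ≠ K) (x : ℍ × ℍ) :
    stemAct K 1 (stemSolve J K x) = x.2 := by
  have hD : (J - K) * ((J - K)⁻¹ * (x.1 - x.2)) = x.1 - x.2 :=
    mul_inv_cancel_left₀ (sub_ne_zero.2 hJK) _
  rw [sub_mul] at hD
  rw [stemAct_apply, stemSolve_apply, one_mul, mul_one, sub_add, hD, sub_sub_cancel]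

lemma stem_ext (hJK : J ≠ K) {p q : ℍ × ℍ} (hJ : stemAct J 1 p = stemAct J 1 q)
    (hK : stemAct K 1 p = stemAct K 1 q) : p = q := by
  rw [← stemSolve_stemAct hJK p, hJ, hK, stemSolve_stemAct hJK]

lemma stemSolve_prodMap_mul (hJ : J ∈ QS) (hK : K ∈ QS) (hJK : J ≠ K) (x : ℍ × ℍ) :
    stemSolve J K ((ContinuousLinearMap.mul ℝ ℍ J).prodMap (.mul ℝ ℍ K) x) =
      stemI (stemSolve J K x) := by
  refine stem_ext hJK ?_ ?_
  · rw [stemAct_stemI hJ, stemAct_stemSolve_left, stemAct_stemSolve_left]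
    rfl
  · rw [stemAct_stemI hK, stemAct_stemSolve_right hJK, stemAct_stemSolve_right hJK]
    rfl

lemma stemSolve_self (J K x : ℍ) : stemSolve J K (x, x) = (x, 0) := by
  simp [stemSolve_apply]

end Stem

section SliceRegular

variable {n : ℕ} {Ω : Set (Fin n → ℍ)} {f g : (Fin n → ℍ) → ℍ} {I J K : ℍ}
  {γ : ℝ → Fin n → ℂ}

lemma map_I_smul_eq_mul_iff (hI : I ∈ QS) (L : (Fin n → ℂ) →L[ℝ] ℍ) :
    (∀ v, L (Complex.I • v) = I * L v) ↔
      ∀ ℓ, L (Pi.single ℓ 1) + I * L (Pi.single ℓ Complex.I) = 0 := by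
  have hI_single (ℓ : Fin n) :
      Complex.I • (Pi.single ℓ 1 : Fin n → ℂ) = Pi.single ℓ Complex.I := by
    rw [← Pi.single_smul, smul_eq_mul, mul_one]
  refine ⟨fun h ℓ => ?_, fun h v => ?_⟩
  · rw [← hI_single, h, ← mul_assoc, mul_self_of_mem_QS hI, neg_one_mul, add_neg_cancel]
  · let rotate : (Fin n → ℂ) →ₗ[ℝ] Fin n → ℂ :=
      (Complex.I • LinearMap.id (R := ℂ)).restrictScalars ℝ
    have hI_single_I (ℓ : Fin n) :
        Complex.I • (Pi.single ℓ Complex.I : Fin n → ℂ) = -Pi.single ℓ 1 := by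
      rw [← hI_single, smul_smul, Complex.I_mul_I, neg_one_smul]
    have hsingle (ℓ : Fin n) : L (Pi.single ℓ Complex.I) = I * L (Pi.single ℓ 1) := by
      rw [eq_neg_of_add_eq_zero_left (h ℓ), mul_neg, ← mul_assoc, mul_self_of_mem_QS hI,
        neg_one_mul, neg_neg]
    have hmaps : L.toLinearMap ∘ₗ rotate = LinearMap.mulLeft ℝ I ∘ₗ L.toLinearMap := by
      refine LinearMap.pi_ext' fun ℓ => Complex.basisOneI.ext fun i => ?_
      fin_cases i
      · simp [rotate, hI_single, hsingle]
      · simp [rotate, hI_single_I, hsingle, ← mul_assoc, mul_self_of_mem_QS hI]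
    exact LinearMap.congr_fun hmaps v

lemma sliceRegular_iff (hΩ : sliceOpen n Ω) :
    SliceRegular n Ω f ↔ ∀ I ∈ QS, ∀ z, PsiI n I z ∈ Ω →
      IsHolomorphicAt (.mul ℝ ℍ I) (fun z => f (PsiI n I z)) z := by
  refine forall₂_congr fun I hI => ⟨fun ⟨hd, hCR⟩ z hz => ?_, fun h => ⟨fun z hz => ?_, ?_⟩⟩
  · have hz' := (hΩ.2 I hI).mem_nhds hz
    refine ⟨_, (hd.differentiableAt hz').hasFDerivAt, ?_⟩
    rw [← fderivWithin_of_mem_nhds hz']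
    exact (map_I_smul_eq_mul_iff hI _).2 (hCR z hz)
  · obtain ⟨L, hL, -⟩ := h z hz
    exact hL.differentiableAt.differentiableWithinAt
  · intro z hz
    obtain ⟨L, hL, hLI⟩ := h z hz
    rw [fderivWithin_of_isOpen (hΩ.2 I hI) hz, hL.fderiv]
    exact (map_I_smul_eq_mul_iff hI L).1 hLI

lemma SliceRegular.add (hΩ : sliceOpen n Ω) (hf : SliceRegular n Ω f)
    (hg : SliceRegular n Ω g) : SliceRegular n Ω (fun q => f q + g q) := by
  rw [sliceRegular_iff hΩ] at hf hg ⊢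
  exact fun I hI z hz => (hf I hI z hz).add (hg I hI z hz)

lemma SliceRegular.isHolomorphicAt_stemSolve (hΩ : sliceOpen n Ω) (hf : SliceRegular n Ω f)
    (hJ : J ∈ QS) (hK : K ∈ QS) (hJK : J ≠ K) {z : Fin n → ℂ} (hJz : PsiI n J z ∈ Ω)
    (hKz : PsiI n K z ∈ Ω) :
    IsHolomorphicAt stemI (fun w => stemSolve J K (f (PsiI n J w), f (PsiI n K w))) z := by
  rw [sliceRegular_iff hΩ] at hf
  exact ((hf J hJ z hJz).prodMk (hf K hK z hKz)).clm_comp (stemSolve J K)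
    (stemSolve_prodMap_mul hJ hK hJK)

theorem SliceRegular.eq_stemAct_stemSolve (hΩ : sliceOpen n Ω) (hf : SliceRegular n Ω f)
    (hγ : γ ∈ PathsC n) (hI : I ∈ sliceUnits n Ω γ) (hJ : J ∈ sliceUnits n Ω γ)
    (hK : K ∈ sliceUnits n Ω γ) (hJK : J ≠ K) :
    f (PsiI n I (γ 1)) =
      stemAct I 1 (stemSolve J K (f (PsiI n J (γ 1)), f (PsiI n K (γ 1)))) := by
  have hII (x : ℍ) : ContinuousLinearMap.mul ℝ ℍ I (ContinuousLinearMap.mul ℝ ℍ I x) = -x := by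
    simp [← mul_assoc, mul_self_of_mem_QS hI.1]
  refine IsHolomorphicAt.eq_at_path_end_of_eq_on_real hII
    (((hΩ.2 I hI.1).inter (hΩ.2 J hJ.1)).inter (hΩ.2 K hK.1))
    (u := fun z => f (PsiI n I z))
    (v := fun z => stemAct I 1 (stemSolve J K (f (PsiI n J z), f (PsiI n K z))))
    (fun z hz => (sliceRegular_iff hΩ).1 hf I hI.1 z hz.1.1)
    (fun z hz => (hf.isHolomorphicAt_stemSolve hΩ hJ.1 hK.1 hJK hz.1.2 hz.2).clm_comp
      (stemAct I 1) (stemAct_stemI hI.1 1))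
    (fun z _ hreal => ?_) hγ fun t ht => ⟨⟨hI.2 t ht, hJ.2 t ht⟩, hK.2 t ht⟩
  rw [PsiI_eq_of_real hreal J I, PsiI_eq_of_real hreal K I, stemSolve_self]
  simp [stemAct_apply]

end SliceRegular

section StemFunctions

variable {n : ℕ} {Ω : Set (Fin n → ℍ)} {f : (Fin n → ℍ) → ℍ}
  {F : (ℝ → Fin n → ℂ) → ℍ × ℍ} {γ : ℝ → Fin n → ℂ} {I J K : ℍ}

lemma isStemOf_iff : isStemOf n Ω f F ↔ ∀ γ ∈ PathsIn n Ω, ∀ I ∈ sliceUnits n Ω γ,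
    f (PsiI n I (γ 1)) = stemAct I 1 (F γ) := by
  simp only [isStemOf, stemAct_apply, one_mul, mul_one]

theorem SliceRegular.pathSliceFn (hΩ : sliceOpen n Ω) (hsp : stemPreserving n Ω Ω)
    (hf : SliceRegular n Ω f) : PathSliceFn n Ω f := by
  have hstem (γ : ℝ → Fin n → ℂ) : ∃ p, γ ∈ PathsIn n Ω → ∀ I ∈ sliceUnits n Ω γ,
      f (PsiI n I (γ 1)) = stemAct I 1 p := by
    by_cases hγ : γ ∈ PathsIn n Ω
    · obtain ⟨J, hJ, K, hK, hJK⟩ := hsp.1 γ hγ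
      exact ⟨_, fun _ I hI => hf.eq_stemAct_stemSolve hΩ hγ.1 hI hJ hK hJK⟩
    · exact ⟨0, fun h => absurd h hγ⟩
  choose F hF using hstem
  exact ⟨F, isStemOf_iff.2 hF⟩

namespace isStemOf

lemma apply_PsiI_path_end (hF : isStemOf n Ω f F) (hγ : γ ∈ PathsC n)
    (hI : I ∈ sliceUnits n Ω γ) : f (PsiI n I (γ 1)) = stemAct I 1 (F γ) :=
  isStemOf_iff.1 hF γ ⟨hγ, I, hI⟩ I hI

lemma eq_stemSolve (hF : isStemOf n Ω f F) (hγ : γ ∈ PathsC n) (hJ : J ∈ sliceUnits n Ω γ)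
    (hK : K ∈ sliceUnits n Ω γ) (hJK : J ≠ K) :
    F γ = stemSolve J K (f (PsiI n J (γ 1)), f (PsiI n K (γ 1))) := by
  rw [hF.apply_PsiI_path_end hγ hJ, hF.apply_PsiI_path_end hγ hK, stemSolve_stemAct hJK]

lemma eq_of_forall_eq_stemAct (hsp : stemPreserving n Ω Ω) (hF : isStemOf n Ω f F)
    (hγ : γ ∈ PathsIn n Ω) {p : ℍ × ℍ}
    (h : ∀ I ∈ sliceUnits n Ω γ, f (PsiI n I (γ 1)) = stemAct I 1 p) : F γ = p := by
  obtain ⟨J, hJ, K, hK, hJK⟩ := hsp.1 γ hγ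
  rw [hF.eq_stemSolve hγ.1 hJ hK hJK, h J hJ, h K hK, stemSolve_stemAct hJK]

lemma eq_of_path_end_eq (hsp : stemPreserving n Ω Ω) (hF : isStemOf n Ω f F)
    {α β : ℝ → Fin n → ℂ} (hα : α ∈ PathsIn n Ω) (hβ : β ∈ PathsIn n Ω) (hαβ : α 1 = β 1)
    (hIα : I ∈ sliceUnits n Ω α) (hIβ : I ∈ sliceUnits n Ω β) : F α = F β := by
  have hne : ∃ J ∈ sliceUnits n Ω α ∩ sliceUnits n Ω β, J ≠ I := by
    by_contra! h
    exact hsp.2 α hα β hβ hαβ ⟨I, Set.eq_singleton_iff_unique_mem.2 ⟨⟨hIα, hIβ⟩, h⟩⟩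
  obtain ⟨J, ⟨hJα, hJβ⟩, hJI⟩ := hne
  rw [hF.eq_stemSolve hα.1 hJα hIα hJI, hF.eq_stemSolve hβ.1 hJβ hIβ hJI, hαβ]

lemma apply_conjPath (hsp : stemPreserving n Ω Ω) (hF : isStemOf n Ω f F)
    (hγ : γ ∈ PathsIn n Ω) : F (conjPath n γ) = ((F γ).1, -(F γ).2) := by
  refine hF.eq_of_forall_eq_stemAct hsp (conjPath_mem_PathsIn hγ) fun I hI => ?_
  have hnegI : -I ∈ sliceUnits n Ω γ := neg_mem_sliceUnits_conjPath_iff.1 (by rwa [neg_neg])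
  have hend := PsiI_neg_conjPath (n := n) (-I) γ 1
  rw [neg_neg] at hend
  rw [hend, hF.apply_PsiI_path_end hγ.1 hnegI]
  simp [stemAct_apply]

theorem isHolomorphicAt_extendPath (hΩ : sliceOpen n Ω) (hsp : stemPreserving n Ω Ω)
    (hF : isStemOf n Ω f F) (hf : SliceRegular n Ω f) (hγ : γ ∈ PathsIn n Ω) :
    IsHolomorphicAt stemI (fun z => F (extendPath n γ z)) (γ 1) := by
  obtain ⟨J, hJ, K, hK, hJK⟩ := hsp.1 γ hγ
  refine (hf.isHolomorphicAt_stemSolve hΩ hJ.1 hK.1 hJK (PsiI_path_end_mem hJ)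
    (PsiI_path_end_mem hK)).congr_of_eventuallyEq ?_
  filter_upwards [eventually_mem_sliceUnits_extendPath hΩ hJ,
    eventually_mem_sliceUnits_extendPath hΩ hK] with z hJz hKz
  rw [hF.eq_stemSolve (extendPath_mem_PathsC hγ.1 z) hJz hKz hJK, extendPath_one]

end isStemOf

lemma PathSliceFn.isStemOf_stemF (hf : PathSliceFn n Ω f) : isStemOf n Ω f (stemF n Ω f) := by
  unfold PathSliceFn at hf
  rw [stemF, dif_pos hf]
  exact hf.choose_spec

end StemFunctions

section StarProduct

variable {n : ℕ} {Ω : Set (Fin n → ℍ)} {f g h : (Fin n → ℍ) → ℍ}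
  {F G : (ℝ → Fin n → ℂ) → ℍ × ℍ} {γ : ℝ → Fin n → ℂ} {I : ℍ}

lemma isStemOf.scrF_eq (hsp : stemPreserving n Ω Ω) (hG : isStemOf n Ω g G)
    (hγ : γ ∈ PathsC n) (hI : I ∈ sliceUnits n Ω γ) (hne : ∃ ℓ, (γ 1 ℓ).im ≠ 0)
    (hs : scrI (PsiI n I (γ 1)) = I) : scrF n Ω Ω g (PsiI n I (γ 1)) = G γ := by
  have hγIn : γ ∈ PathsIn n Ω := ⟨hγ, I, hI⟩
  have hex : (∃ ℓ, Quaternion.im (PsiI n I (γ 1) ℓ) ≠ 0) ∧ ∃ δ, δ ∈ PathsIn n Ω ∧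
      pathInSlice n Ω (scrI (PsiI n I (γ 1))) δ ∧
      PsiI n (scrI (PsiI n I (γ 1))) (δ 1) = PsiI n I (γ 1) :=
    ⟨(exists_im_PsiI_ne_zero_iff hI.1 _).2 hne, γ, hγIn, by rw [hs]; exact ⟨hI.2, rfl⟩⟩
  rw [scrF, dif_pos hex]
  obtain ⟨hδ, hδI, hδend⟩ := hex.2.choose_spec
  generalize hex.2.choose = δ at hδ hδI hδend ⊢
  rw [hs] at hδI hδend
  have hstem : isStemOf n Ω g (stemF n Ω g) := PathSliceFn.isStemOf_stemF ⟨G, hG⟩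
  rw [hstem.eq_of_path_end_eq hsp hδ hγIn (PsiI_injective hI.1 hδend) ⟨hI.1, hδI⟩ hI]
  exact hstem.eq_of_forall_eq_stemAct hsp hγIn (isStemOf_iff.1 hG γ hγIn)

/-- If `ℑ` takes the value `-I` at the end point, then it is computed along the conjugate path,
whose stem is the conjugate stem: the two signs cancel. -/
theorem isStemOf.starProd_PsiI (hsp : stemPreserving n Ω Ω) (hG : isStemOf n Ω g G)
    (f : (Fin n → ℍ) → ℍ) (hγ : γ ∈ PathsC n) (hI : I ∈ sliceUnits n Ω γ) :
    starProd n Ω Ω f g (PsiI n I (γ 1)) = stemAct I (f (PsiI n I (γ 1))) (G γ) := by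
  have hγIn : γ ∈ PathsIn n Ω := ⟨hγ, I, hI⟩
  rw [starProd, stemAct_apply]
  by_cases hne : ∃ ℓ, (γ 1 ℓ).im ≠ 0
  · rcases scrI_PsiI hI.1 hne with hs | hs
    · rw [hG.scrF_eq hsp hγ hI hne hs, hs]
    · have hconj := hG.scrF_eq hsp (conjPath_mem_PathsC hγ)
        (neg_mem_sliceUnits_conjPath_iff.2 hI) (by simpa [conjPath] using hne)
        (by rw [PsiI_neg_conjPath, hs])
      rw [PsiI_neg_conjPath, hG.apply_conjPath hsp hγIn] at hconj
      rw [hconj, hs, neg_mul, neg_mul_neg]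
  · have hreal : ∀ ℓ, (γ 1 ℓ).im = 0 := by simpa using hne
    have hG_real : G γ = (g (PsiI n I (γ 1)), 0) :=
      hG.eq_of_forall_eq_stemAct hsp hγIn fun J _ => by
        simp [stemAct_apply, PsiI_eq_of_real hreal J I]
    rw [scrF, dif_neg fun h => hne ((exists_im_PsiI_ne_zero_iff hI.1 _).1 h.1), hG_real]
    simp only [mul_zero]

theorem isStemOf.starProd (hsp : stemPreserving n Ω Ω) (hF : isStemOf n Ω f F)
    (hG : isStemOf n Ω g G) :
    isStemOf n Ω (starProd n Ω Ω f g) (fun γ => stemMul (F γ) (G γ)) := by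
  refine isStemOf_iff.2 fun γ hγ I hI => ?_
  rw [hG.starProd_PsiI hsp f hγ.1 hI, hF.apply_PsiI_path_end hγ.1 hI, stemAct_stemAct hI.1]

lemma isStemOf.add (hF : isStemOf n Ω f F) (hG : isStemOf n Ω g G) :
    isStemOf n Ω (fun q => f q + g q) (fun γ => F γ + G γ) := by
  refine isStemOf_iff.2 fun γ hγ I hI => ?_
  rw [map_add, hF.apply_PsiI_path_end hγ.1 hI, hG.apply_PsiI_path_end hγ.1 hI]

lemma isStemOf.smul (a : ℝ) (hF : isStemOf n Ω f F) :
    isStemOf n Ω (fun q => a • f q) (fun γ => a • F γ) := by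
  refine isStemOf_iff.2 fun γ hγ I hI => ?_
  rw [map_smul, hF.apply_PsiI_path_end hγ.1 hI]

lemma isStemOf_one : isStemOf n Ω (fun _ => 1) (fun _ => (1, 0)) := by
  simp [isStemOf]

theorem SliceRegular.starProd (hΩ : sliceOpen n Ω) (hrc : realPathConnected n Ω)
    (hsp : stemPreserving n Ω Ω) (hf : SliceRegular n Ω f) (hg : SliceRegular n Ω g) :
    SliceRegular n Ω (starProd n Ω Ω f g) := by
  obtain ⟨G, hG⟩ := hg.pathSliceFn hΩ hsp
  refine (sliceRegular_iff hΩ).2 fun I hI z hz => ?_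
  obtain ⟨γ, hγ, hIγ, rfl⟩ := hrc.exists_path_to hI hz
  refine (((sliceRegular_iff hΩ).1 hf I hI _ hz).clm_bilinear (stemAct I) (stemAct_mul_left I)
    (stemAct_stemI hI) (hG.isHolomorphicAt_extendPath hΩ hsp hg hγ)).congr_of_eventuallyEq ?_
  filter_upwards [eventually_mem_sliceUnits_extendPath hΩ hIγ] with w hw
  simpa only [extendPath_one] using hG.starProd_PsiI hsp f (extendPath_mem_PathsC hγ.1 w) hw

theorem starProd_assoc (hrc : realPathConnected n Ω) (hsp : stemPreserving n Ω Ω)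
    (f : (Fin n → ℍ) → ℍ) (hg : PathSliceFn n Ω g) (hh : PathSliceFn n Ω h) :
    Set.EqOn (starProd n Ω Ω (starProd n Ω Ω f g) h) (starProd n Ω Ω f (starProd n Ω Ω g h)) Ω := by
  intro q hq
  obtain ⟨G, hG⟩ := hg
  obtain ⟨H, hH⟩ := hh
  obtain ⟨γ, hγ, I, hI, rfl⟩ := hrc q hq
  rw [hH.starProd_PsiI hsp _ hγ.1 hI, hG.starProd_PsiI hsp f hγ.1 hI, stemAct_stemAct hI.1,
    (hG.starProd hsp hH).starProd_PsiI hsp f hγ.1 hI]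

theorem one_starProd (hrc : realPathConnected n Ω) (hsp : stemPreserving n Ω Ω)
    (hf : PathSliceFn n Ω f) : Set.EqOn (starProd n Ω Ω (fun _ => 1) f) f Ω := by
  intro q hq
  obtain ⟨F, hF⟩ := hf
  obtain ⟨γ, hγ, I, hI, rfl⟩ := hrc q hq
  rw [hF.starProd_PsiI hsp _ hγ.1 hI, hF.apply_PsiI_path_end hγ.1 hI]

theorem starProd_one (hrc : realPathConnected n Ω) (hsp : stemPreserving n Ω Ω)
    (f : (Fin n → ℍ) → ℍ) : Set.EqOn (starProd n Ω Ω f (fun _ => 1)) f Ω := by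
  intro q hq
  obtain ⟨γ, hγ, I, hI, rfl⟩ := hrc q hq
  rw [isStemOf_one.starProd_PsiI hsp f hγ.1 hI, stemAct_apply, mul_one, mul_zero, add_zero]

theorem starProd_add (hrc : realPathConnected n Ω) (hsp : stemPreserving n Ω Ω)
    (f : (Fin n → ℍ) → ℍ) (hg : PathSliceFn n Ω g) (hh : PathSliceFn n Ω h) :
    Set.EqOn (starProd n Ω Ω f (fun p => g p + h p))
      (fun q => starProd n Ω Ω f g q + starProd n Ω Ω f h q) Ω := by
  intro q hq
  obtain ⟨G, hG⟩ := hg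
  obtain ⟨H, hH⟩ := hh
  obtain ⟨γ, hγ, I, hI, rfl⟩ := hrc q hq
  rw [(hG.add hH).starProd_PsiI hsp f hγ.1 hI, map_add]
  dsimp only
  rw [hG.starProd_PsiI hsp f hγ.1 hI, hH.starProd_PsiI hsp f hγ.1 hI]

theorem starProd_smul (hrc : realPathConnected n Ω) (hsp : stemPreserving n Ω Ω) (a : ℝ)
    (f : (Fin n → ℍ) → ℍ) (hg : PathSliceFn n Ω g) :
    Set.EqOn (starProd n Ω Ω f (fun p => a • g p)) (fun q => a • starProd n Ω Ω f g q) Ω := by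
  intro q hq
  obtain ⟨G, hG⟩ := hg
  obtain ⟨γ, hγ, I, hI, rfl⟩ := hrc q hq
  rw [(hG.smul a).starProd_PsiI hsp f hγ.1 hI, map_smul]
  dsimp only
  rw [hG.starProd_PsiI hsp f hγ.1 hI]

lemma add_starProd (Ω₁ Ω₂ : Set (Fin n → ℍ)) (f g h : (Fin n → ℍ) → ℍ) (q : Fin n → ℍ) :
    starProd n Ω₁ Ω₂ (fun p => f p + g p) h q =
      starProd n Ω₁ Ω₂ f h q + starProd n Ω₁ Ω₂ g h q := by
  simp only [starProd]
  noncomm_ring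

lemma smul_starProd (Ω₁ Ω₂ : Set (Fin n → ℍ)) (a : ℝ) (f g : (Fin n → ℍ) → ℍ)
    (q : Fin n → ℍ) :
    starProd n Ω₁ Ω₂ (fun p => a • f p) g q = a • starProd n Ω₁ Ω₂ f g q := by
  simp only [starProd, smul_mul_assoc, mul_smul_comm, smul_add]

end StarProduct

end

theorem statement8 (n : ℕ) (hn : 1 ≤ n) (Ω : Set (Fin n → ℍ)) (hΩ : sliceOpen n Ω)
    (hrc : realPathConnected n Ω) (hsp : stemPreserving n Ω Ω)
    (f g h : (Fin n → ℍ) → ℍ)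
    (hf : SliceRegular n Ω f) (hg : SliceRegular n Ω g) (hh : SliceRegular n Ω h)
    (a : ℝ) :
    SliceRegular n Ω (fun q => f q + g q) ∧
    SliceRegular n Ω (starProd n Ω Ω f g) ∧
    (∀ q ∈ Ω, starProd n Ω Ω (starProd n Ω Ω f g) h q
        = starProd n Ω Ω f (starProd n Ω Ω g h) q) ∧
    (∀ q ∈ Ω, starProd n Ω Ω (fun _ => 1) f q = f q) ∧
    (∀ q ∈ Ω, starProd n Ω Ω f (fun _ => 1) q = f q) ∧
    (∀ q ∈ Ω, starProd n Ω Ω f (fun p => g p + h p) q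
        = starProd n Ω Ω f g q + starProd n Ω Ω f h q) ∧
    (∀ q ∈ Ω, starProd n Ω Ω (fun p => f p + g p) h q
        = starProd n Ω Ω f h q + starProd n Ω Ω g h q) ∧
    (∀ q ∈ Ω, starProd n Ω Ω (fun p => a • f p) g q = a • starProd n Ω Ω f g q) ∧
    (∀ q ∈ Ω, starProd n Ω Ω f (fun p => a • g p) q = a • starProd n Ω Ω f g q) := by
  have hg' := hg.pathSliceFn hΩ hsp
  have hh' := hh.pathSliceFn hΩ hsp
  exact ⟨hf.add hΩ hg, hf.starProd hΩ hrc hsp hg, starProd_assoc hrc hsp f hg' hh',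
    one_starProd hrc hsp (hf.pathSliceFn hΩ hsp), starProd_one hrc hsp f,
    starProd_add hrc hsp f hg' hh', fun q _ => add_starProd Ω Ω f g h q,
    fun q _ => smul_starProd Ω Ω a f g q, starProd_smul hrc hsp a f hg'⟩
end

section
/- Fix an integer n ≥ 1. Let Ω₁ ⊆ ℍ_s^n be real-path-connected, let Ω₂ ⊆ ℍ_s^n be Ω₁-stem-preserving, and let f : Ω₂ → ℍ be path-slice. Then for any two stem functions G and G' of f, the restrictions of G and G' to 𝒫(ℂ^n, Ω₁) coincide: G(γ) = G'(γ) for every γ ∈ 𝒫(ℂ^n, Ω₁). -/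
open scoped ENNReal NNReal

theorem eq_of_add_mul_eq_add_mul {R : Type*} [NonUnitalNonAssocRing R] [NoZeroDivisors R]
    {a b c d x y : R} (hxy : x ≠ y) (hx : a + x * b = c + x * d) (hy : a + y * b = c + y * d) :
    a = c ∧ b = d := by
  have hslope : (x - y) * b = (x - y) * d :=
    calc (x - y) * b = (a + x * b) - (a + y * b) := by rw [sub_mul, add_sub_add_left_eq_sub]
      _ = (c + x * d) - (c + y * d) := by rw [hx, hy]
      _ = (x - y) * d := by rw [sub_mul, add_sub_add_left_eq_sub]
  obtain rfl : b = d := mul_left_cancel₀ (sub_ne_zero.mpr hxy) hslope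
  exact ⟨add_right_cancel hx, rfl⟩

theorem statement11_general {n : ℕ} {Ω : Set (Fin n → ℍ)} {f : (Fin n → ℍ) → ℍ}
    {G G' : (ℝ → Fin n → ℂ) → ℍ × ℍ} (hG : isStemOf n Ω f G) (hG' : isStemOf n Ω f G')
    {γ : ℝ → Fin n → ℂ} (hγ : γ ∈ PathsC n) (hunits : (sliceUnits n Ω γ).Nontrivial) :
    G γ = G' γ := by
  have hγΩ : γ ∈ PathsIn n Ω := ⟨hγ, hunits.nonempty⟩
  have hvalues : ∀ I ∈ sliceUnits n Ω γ, (G γ).1 + I * (G γ).2 = (G' γ).1 + I * (G' γ).2 :=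
    fun I hI => (hG γ hγΩ I hI).symm.trans (hG' γ hγΩ I hI)
  obtain ⟨I, hI, J, hJ, hIJ⟩ := hunits
  exact Prod.ext_iff.mpr (eq_of_add_mul_eq_add_mul hIJ (hvalues I hI) (hvalues J hJ))

theorem statement11 (n : ℕ) (hn : 1 ≤ n) (Ω₁ Ω₂ : Set (Fin n → ℍ))
    (hΩ₁ : Ω₁ ⊆ weakSliceCone n) (hΩ₂ : Ω₂ ⊆ weakSliceCone n)
    (hrc : realPathConnected n Ω₁) (hsp : stemPreserving n Ω₁ Ω₂)
    (f : (Fin n → ℍ) → ℍ) (G G' : (ℝ → Fin n → ℂ) → ℍ × ℍ)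
    (hG : isStemOf n Ω₂ f G) (hG' : isStemOf n Ω₂ f G')
    (γ : ℝ → Fin n → ℂ) (hγ : γ ∈ PathsIn n Ω₁) :
    G γ = G' γ :=
  statement11_general hG hG' hγ.1 (hsp.1 γ hγ)
end

section
/- Fix an integer n ≥ 1. Let Ω ∈ τ_s(ℍ_s^n) and let f ∈ 𝒮ℛ(Ω) be a weakly slice regular function. Then f is path-slice: there exists F : 𝒫(ℂ^n, Ω) → ℍ^{2×1} such that f(γ^I(1)) = (1, I)·F(γ) for every γ ∈ 𝒫(ℂ^n, Ω) and every I ∈ 𝕊(Ω, γ). -/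
open scoped ENNReal NNReal

/-!
Let `I ≠ J` be two units for which `γ^I` and `γ^J` lie in `Ω`. There is exactly one pair `(a, b)`
of `ℍ`-valued functions with `f_I = a + I b` and `f_J = a + J b`, and the Cauchy–Riemann equations
of `f_I` and `f_J` force `∂b/∂y_ℓ = ∂a/∂x_ℓ` and `∂a/∂y_ℓ = -∂b/∂x_ℓ`: these no longer mention `I`
and `J`. Hence `a + K b` is holomorphic for left multiplication by any third unit `K`, as is `f_K`.
Both agree at real points, where all slices meet, so by the identity theorem they agree along `γ`.
-/

open Set Filter Topology

section IdentityTheorem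

variable {E F : Type*} [NormedAddCommGroup E] [NormedSpace ℂ E]
  [NormedAddCommGroup F] [NormedSpace ℂ F] [CompleteSpace F] {U : Set E} {f : E → F}

lemma eq_zero_of_frequently_eq_zero_on_complex_line (hU : IsOpen U) (hUc : Convex ℝ U)
    (hf : DifferentiableOn ℂ f U) {p v : E} {t : ℂ} (hp : p ∈ U) (ht : p + t • v ∈ U)
    (h0 : ∃ᶠ s in 𝓝[≠] (0 : ℂ), f (p + s • v) = 0) : f (p + t • v) = 0 := by
  let L : ℂ → E := fun s => p + s • v
  have hL : Differentiable ℂ L := (differentiable_id.smul_const v).const_add p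
  have hV : IsPreconnected (L ⁻¹' U) := by
    have hVc : Convex ℝ (L ⁻¹' U) :=
      (hUc.translate_preimage_right p).linear_preimage
        ((LinearMap.toSpanSingleton ℂ E v).restrictScalars ℝ)
    exact hVc.isPreconnected
  have hfL : AnalyticOnNhd ℂ (f ∘ L) (L ⁻¹' U) :=
    (hf.comp hL.differentiableOn (mapsTo_preimage L U)).analyticOnNhd
      (hU.preimage hL.continuous)
  have hp0 : (0 : ℂ) ∈ L ⁻¹' U := by simpa [L] using hp
  exact hfL.eqOn_zero_of_preconnected_of_frequently_eq_zero hV hp0 h0 ht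

lemma eqOn_zero_of_isPreconnected_of_eventuallyEq_zero (hU : IsOpen U) (hUc : IsPreconnected U)
    (hf : DifferentiableOn ℂ f U) {p : E} (hp : p ∈ U) (h0 : f =ᶠ[𝓝 p] 0) : EqOn f 0 U := by
  let Z : Set E := {z | f =ᶠ[𝓝 z] 0}
  have hZ : IsOpen Z := isOpen_setOfPred_eventually_nhds
  suffices hUZ : U ⊆ Z from fun z hz => (hUZ hz).self_of_nhds
  refine hUc.subset_of_closure_inter_subset hZ ⟨p, hp, h0⟩ ?_
  rintro z ⟨hzZ, hzU⟩
  obtain ⟨r, hr, hball⟩ := Metric.isOpen_iff.1 hU z hzU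
  obtain ⟨q, hq, hqZ⟩ := mem_closure_iff.1 hzZ _ Metric.isOpen_ball (Metric.mem_ball_self hr)
  filter_upwards [Metric.ball_mem_nhds z hr] with w hw
  have hline : Tendsto (fun s : ℂ => q + s • (w - q)) (𝓝 0) (𝓝 q) :=
    Continuous.tendsto' (by fun_prop) _ _ (by simp)
  have h := eq_zero_of_frequently_eq_zero_on_complex_line (t := 1) Metric.isOpen_ball
    (convex_ball z r) (hf.mono hball) hq (by simpa using hw)
    ((hline.eventually hqZ).filter_mono nhdsWithin_le_nhds).frequently
  simpa using h

variable {ι : Type*} [Finite ι] {W : Set (ι → ℂ)} {g : (ι → ℂ) → F}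

lemma eventuallyEq_zero_of_eq_zero_on_real (hW : IsOpen W) (hg : DifferentiableOn ℂ g W)
    (hreal : ∀ z ∈ W, (∀ l, (z l).im = 0) → g z = 0) {p : ι → ℂ} (hp : p ∈ W)
    (hp_real : ∀ l, (p l).im = 0) : g =ᶠ[𝓝 p] 0 := by
  have := Fintype.ofFinite ι
  obtain ⟨r, hr, hball⟩ := Metric.isOpen_iff.1 hW p hp
  let x : (ι → ℂ) → ι → ℂ := fun w l => (w l).re
  have hx : Tendsto x (𝓝 p) (𝓝 p) :=
    Continuous.tendsto' (by fun_prop) _ _ (funext fun l => Complex.ext rfl (hp_real l).symm)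
  filter_upwards [Metric.ball_mem_nhds p hr, hx (Metric.ball_mem_nhds p hr)] with w hw hxw
  let y : ι → ℂ := fun l => (w l).im
  have hwxy : w = x w + Complex.I • y := by
    ext l
    simpa [x, y, mul_comm] using (Complex.re_add_im (w l)).symm
  -- `x w + s • y` is a real point whenever `s` is real, and `0` is a limit of real `s ≠ 0`.
  have hvanish : ∀ᶠ s : ℝ in 𝓝 0, g (x w + (s : ℂ) • y) = 0 := by
    have hline : Tendsto (fun s : ℝ => x w + (s : ℂ) • y) (𝓝 0) (𝓝 (x w)) :=
      Continuous.tendsto' (by fun_prop) _ _ (by simp)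
    filter_upwards [hline (hW.mem_nhds (hball hxw))] with s hs
    exact hreal _ hs fun l => by simp [x, y]
  have hofReal : Tendsto (fun s : ℝ => (s : ℂ)) (𝓝[≠] 0) (𝓝[≠] 0) :=
    Complex.continuous_ofReal.continuousWithinAt.tendsto_nhdsWithin fun s hs => by simpa using hs
  rw [hwxy]
  exact eq_zero_of_frequently_eq_zero_on_complex_line Metric.isOpen_ball (convex_ball p r)
    (hg.mono hball) hxw (hwxy ▸ hw)
    (hofReal.frequently (hvanish.filter_mono nhdsWithin_le_nhds).frequently)

end IdentityTheorem

section ImaginaryUnit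

lemma mem_QS_iff_mul_self {I : ℍ} : I ∈ QS ↔ I * I = -1 := by
  rw [← sq]; rfl

lemma star_eq_neg_of_mul_self_eq_neg_one {I : ℍ} (hI : I * I = -1) : star I = -I := by
  have hnorm : ‖I‖ = 1 := by
    have h : ‖I‖ ^ 2 = 1 := by rw [← norm_pow, sq, hI, norm_neg, norm_one]
    exact (pow_eq_one_iff_of_nonneg (norm_nonneg I) two_ne_zero).1 h
  rw [Quaternion.star_eq_neg, ← Quaternion.sq_eq_neg_normSq,
    Quaternion.normSq_eq_norm_mul_self, hnorm, sq, hI, mul_one, Quaternion.coe_one]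

lemma star_liftAux {I : ℍ} (hI : I * I = -1) (z : ℂ) :
    star (Complex.liftAux I hI z) = Complex.liftAux I hI (star z) := by
  simp [Complex.liftAux_apply, star_eq_neg_of_mul_self_eq_neg_one hI, Quaternion.algebraMap_def]

lemma norm_liftAux {I : ℍ} (hI : I * I = -1) (z : ℂ) : ‖Complex.liftAux I hI z‖ = ‖z‖ := by
  have h : ‖Complex.liftAux I hI z‖ * ‖Complex.liftAux I hI z‖ = ‖z‖ * ‖z‖ := by
    rw [← CStarRing.norm_star_mul_self, star_liftAux, ← map_mul, ← CStarRing.norm_star_mul_self,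
      Complex.star_def, ← Complex.normSq_eq_conj_mul_self]
    simp
  exact (mul_self_inj (norm_nonneg _) (norm_nonneg _)).1 h

/-- The complex structure on `ℍ` in which `i` acts as left multiplication by `I`. It depends on `I`,
so it is not an instance and is introduced locally where the identity theorem is applied. -/
noncomputable abbrev leftNormedSpace {I : ℍ} (hI : I * I = -1) : NormedSpace ℂ ℍ where
  __ := Module.compHom ℍ (Complex.liftAux I hI).toRingHom
  norm_smul_le z q := (norm_mul_le _ q).trans_eq (by rw [← norm_liftAux hI z]; rfl)

lemma map_I_smul_of_cauchyRiemann {ι A : Type*} [Finite ι] [DecidableEq ι] [Ring A] [Algebra ℝ A]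
    {I : A} (hI : I * I = -1) (T : (ι → ℂ) →ₗ[ℝ] A)
    (hT : ∀ l, T (Pi.single l 1) + I * T (Pi.single l Complex.I) = 0) (v : ι → ℂ) :
    T (Complex.I • v) = I * T v := by
  suffices h : T ∘ₗ (LinearMap.lsmul ℂ (ι → ℂ) Complex.I).restrictScalars ℝ
      = LinearMap.mulLeft ℝ I ∘ₗ T from LinearMap.congr_fun h v
  have hone (l : ι) : T (Pi.single l Complex.I) = I * T (Pi.single l 1) := by
    rw [eq_neg_of_add_eq_zero_left (hT l), mul_neg, ← mul_assoc, hI, neg_one_mul, neg_neg]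
  refine LinearMap.pi_ext' fun l => Complex.basisOneI.ext fun k => ?_
  fin_cases k
  · simp [← Pi.single_smul', hone]
  · simp [← Pi.single_smul', hone, ← mul_assoc, hI, Pi.single_neg]

lemma cauchyRiemann_of_two_units {R : Type*} [Ring R] [NoZeroDivisors R] {I J : R}
    (hI : I * I = -1) (hJ : J * J = -1) (hIJ : I ≠ J) {a b a' b' : R}
    (haI : a' + I * b' = I * (a + I * b)) (haJ : a' + J * b' = J * (a + J * b)) :
    b' = a ∧ a' = -b := by
  rw [mul_add, ← mul_assoc, hI, neg_one_mul] at haI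
  rw [mul_add, ← mul_assoc, hJ, neg_one_mul] at haJ
  have hb : b' = a := by
    have h : (I - J) * (b' - a) = 0 := by
      calc (I - J) * (b' - a)
          = a' + I * b' - (a' + J * b') - (I * a + -b - (J * a + -b)) := by noncomm_ring
        _ = 0 := by rw [haI, haJ, sub_self]
    simpa [sub_eq_zero, hIJ] using h
  refine ⟨hb, ?_⟩
  rw [hb, add_comm, add_right_inj] at haI
  exact haI

end ImaginaryUnit

section LeftHolomorphic

variable {E : Type*} [NormedAddCommGroup E] [NormedSpace ℂ E] {I J K : ℍ} {g h : E → ℍ}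
  {U V : Set E}

/-- `g` is holomorphic on `U` with respect to the complex structure on `ℍ` in which `i` acts as left
multiplication by `I`. The Cauchy–Riemann equations are stated without coordinates: the real
derivative intertwines multiplication by `i` with left multiplication by `I`. -/
def LeftHolomorphicOn (I : ℍ) (g : E → ℍ) (U : Set E) : Prop :=
  ∀ z ∈ U, ∃ A : E →L[ℝ] ℍ, HasFDerivAt g A z ∧ ∀ v, A (Complex.I • v) = I * A v

namespace LeftHolomorphicOn

lemma mono (hg : LeftHolomorphicOn I g V) (hUV : U ⊆ V) : LeftHolomorphicOn I g U :=
  fun z hz => hg z (hUV hz)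

lemma sub (hg : LeftHolomorphicOn I g U) (hh : LeftHolomorphicOn I h U) :
    LeftHolomorphicOn I (g - h) U := by
  intro z hz
  obtain ⟨A, hA, hAI⟩ := hg z hz
  obtain ⟨B, hB, hBI⟩ := hh z hz
  exact ⟨A - B, hA.sub hB, fun v => by simp [hAI, hBI, mul_sub]⟩

lemma differentiableOn (hI : I * I = -1) (hg : LeftHolomorphicOn I g U) :
    letI := leftNormedSpace hI
    DifferentiableOn ℂ g U := by
  let := leftNormedSpace hI
  have : IsScalarTower ℝ ℂ ℍ :=
    ⟨fun r z q => by
      change Complex.liftAux I hI (r • z) * q = r • (Complex.liftAux I hI z * q)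
      rw [map_smul, smul_mul_assoc]⟩
  intro z hz
  obtain ⟨A, hA, hAI⟩ := hg z hz
  have hsmul (c : ℂ) (v : E) : A (c • v) = c • A v := by
    change A (c • v) = Complex.liftAux I hI c * A v
    conv_lhs => rw [← Complex.re_add_im c, add_smul, mul_smul, Complex.coe_smul, Complex.coe_smul]
    rw [map_add, map_smul, map_smul, hAI, Complex.liftAux_apply, add_mul, smul_mul_assoc,
      Algebra.smul_def c.re]
  let A' : E →L[ℂ] ℍ := { A with map_smul' := hsmul }
  exact (hasFDerivAt_of_restrictScalars (f' := A') ℝ hA rfl).differentiableAt.differentiableWithinAt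

lemma add_mul_of_two_units (hI : I * I = -1) (hJ : J * J = -1) (hK : K * K = -1) (hIJ : I ≠ J)
    {a b : E → ℍ} (haI : LeftHolomorphicOn I (fun z => a z + I * b z) U)
    (haJ : LeftHolomorphicOn J (fun z => a z + J * b z) U) :
    LeftHolomorphicOn K (fun z => a z + K * b z) U := by
  intro z hz
  obtain ⟨A, hA, hAI⟩ := haI z hz
  obtain ⟨B, hB, hBJ⟩ := haJ z hz
  have hb : DifferentiableAt ℝ b z := by
    have hb_eq : b = fun w => (I - J)⁻¹ * (a w + I * b w - (a w + J * b w)) := by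
      funext w
      rw [add_sub_add_left_eq_sub, ← sub_mul, inv_mul_cancel_left₀ (sub_ne_zero.2 hIJ)]
    rw [hb_eq]
    exact (hA.differentiableAt.sub hB.differentiableAt).const_mul _
  have ha : DifferentiableAt ℝ a z := by
    have ha_eq : a = fun w => a w + I * b w - I * b w := by simp
    rw [ha_eq]
    exact hA.differentiableAt.sub (hb.const_mul I)
  have hab (L : ℍ) :
      HasFDerivAt (fun w => a w + L * b w) (fderiv ℝ a z + L • fderiv ℝ b z) z :=
    ha.hasFDerivAt.add (hb.hasFDerivAt.const_mul L)
  obtain rfl := hA.unique (hab I)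
  obtain rfl := hB.unique (hab J)
  refine ⟨_, hab K, fun v => ?_⟩
  obtain ⟨hb', ha'⟩ : fderiv ℝ b z (Complex.I • v) = fderiv ℝ a z v ∧
      fderiv ℝ a z (Complex.I • v) = -fderiv ℝ b z v :=
    cauchyRiemann_of_two_units hI hJ hIJ (hAI v) (hBJ v)
  simp [hb', ha', mul_add, ← mul_assoc, hK, add_comm]

lemma eqOn_of_isPreconnected_of_eq_on_real {ι : Type*} [Fintype ι] (hI : I * I = -1)
    {g h : (ι → ℂ) → ℍ} {U : Set (ι → ℂ)} (hU : IsOpen U) (hUc : IsPreconnected U)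
    (hg : LeftHolomorphicOn I g U) (hh : LeftHolomorphicOn I h U)
    (hreal : ∀ z ∈ U, (∀ l, (z l).im = 0) → g z = h z) {p : ι → ℂ} (hp : p ∈ U)
    (hp_real : ∀ l, (p l).im = 0) : EqOn g h U := by
  let := leftNormedSpace hI
  have hgh : DifferentiableOn ℂ (g - h) U := (hg.sub hh).differentiableOn hI
  have hp0 : g - h =ᶠ[𝓝 p] 0 := eventuallyEq_zero_of_eq_zero_on_real hU hgh
    (fun z hz hz_real => sub_eq_zero.2 (hreal z hz hz_real)) hp hp_real
  exact fun z hz =>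
    sub_eq_zero.1 (eqOn_zero_of_isPreconnected_of_eventuallyEq_zero hU hUc hgh hp hp0 hz)

end LeftHolomorphicOn

end LeftHolomorphic

section StemPair

variable {D : Type*} [DivisionRing D]

/-- The pair `(a, b)` with `a + I * b = p` and `a + J * b = q`, for `I ≠ J`. With `p` and `q` the
values of a slice regular function at the ends of two lifts of a path, it is the value of a stem
function on that path. -/
def stemPair (I J p q : D) : D × D :=
  (p - I * ((I - J)⁻¹ * (p - q)), (I - J)⁻¹ * (p - q))

lemma stemPair_left (I J p q : D) :
    (stemPair I J p q).1 + I * (stemPair I J p q).2 = p :=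
  sub_add_cancel _ _

lemma stemPair_right {I J : D} (hIJ : I ≠ J) (p q : D) :
    (stemPair I J p q).1 + J * (stemPair I J p q).2 = q := by
  have h : (I - J) * ((I - J)⁻¹ * (p - q)) = p - q := mul_inv_cancel_left₀ (sub_ne_zero.2 hIJ) _
  rw [sub_mul] at h
  simp only [stemPair]
  rw [sub_add, h, sub_sub_cancel]

end StemPair

lemma PsiI_eq_of_im_eq_zero {n : ℕ} {z : Fin n → ℂ} (hz : ∀ l, (z l).im = 0) (I J : ℍ) :
    PsiI n I z = PsiI n J z := by
  funext l
  simp only [PsiI, hz, zero_smul]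

namespace SliceRegular

variable {n : ℕ} {Ω : Set (Fin n → ℍ)} {f : (Fin n → ℍ) → ℍ} {γ : ℝ → Fin n → ℂ} {I J K : ℍ}

lemma leftHolomorphicOn (hf : SliceRegular n Ω f) (hI : I ∈ QS) (hΩI : IsOpen (PsiI n I ⁻¹' Ω)) :
    LeftHolomorphicOn I (fun z => f (PsiI n I z)) (PsiI n I ⁻¹' Ω) := by
  obtain ⟨hdiff, hCR⟩ := hf I hI
  exact fun z hz => ⟨_, (hdiff z hz).hasFDerivWithinAt.hasFDerivAt (hΩI.mem_nhds hz),
    map_I_smul_of_cauchyRiemann (mem_QS_iff_mul_self.1 hI)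
      (fderivWithin ℝ (fun z => f (PsiI n I z)) (PsiI n I ⁻¹' Ω) z).toLinearMap (hCR z hz)⟩

theorem eq_stemPair (hΩ : sliceOpen n Ω) (hf : SliceRegular n Ω f) (hγ : γ ∈ PathsC n)
    (hI : I ∈ sliceUnits n Ω γ) (hJ : J ∈ sliceUnits n Ω γ) (hK : K ∈ sliceUnits n Ω γ)
    (hIJ : I ≠ J) :
    let p := stemPair I J (f (PsiI n I (γ 1))) (f (PsiI n J (γ 1)))
    f (PsiI n K (γ 1)) = p.1 + K * p.2 := by
  let W : Set (Fin n → ℂ) := PsiI n I ⁻¹' Ω ∩ PsiI n J ⁻¹' Ω ∩ PsiI n K ⁻¹' Ω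
  let U := connectedComponentIn W (γ 0)
  have hW : IsOpen W := ((hΩ.2 I hI.1).inter (hΩ.2 J hJ.1)).inter (hΩ.2 K hK.1)
  have hUW : U ⊆ W := connectedComponentIn_subset W (γ 0)
  have hγU : γ '' Icc 0 1 ⊆ U :=
    (isPreconnected_Icc.image γ hγ.1).subset_connectedComponentIn
      (mem_image_of_mem γ (left_mem_Icc.2 zero_le_one))
      (image_subset_iff.2 fun t ht => ⟨⟨hI.2 t ht, hJ.2 t ht⟩, hK.2 t ht⟩)
  have hγ0 : γ 0 ∈ U := hγU (mem_image_of_mem γ (left_mem_Icc.2 zero_le_one))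
  have hγ1 : γ 1 ∈ U := hγU (mem_image_of_mem γ (right_mem_Icc.2 zero_le_one))
  have hol {L : ℍ} (hL : L ∈ QS) (hUL : U ⊆ PsiI n L ⁻¹' Ω) :
      LeftHolomorphicOn L (fun z => f (PsiI n L z)) U :=
    (hf.leftHolomorphicOn hL (hΩ.2 L hL)).mono hUL
  let p (z : Fin n → ℂ) : ℍ × ℍ := stemPair I J (f (PsiI n I z)) (f (PsiI n J z))
  have hpI : LeftHolomorphicOn I (fun z => (p z).1 + I * (p z).2) U := by
    simpa only [p, stemPair_left] using hol hI.1 fun z hz => (hUW hz).1.1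
  have hpJ : LeftHolomorphicOn J (fun z => (p z).1 + J * (p z).2) U := by
    simpa only [p, stemPair_right hIJ] using hol hJ.1 fun z hz => (hUW hz).1.2
  have hpK : LeftHolomorphicOn K (fun z => (p z).1 + K * (p z).2) U :=
    hpI.add_mul_of_two_units (mem_QS_iff_mul_self.1 hI.1) (mem_QS_iff_mul_self.1 hJ.1)
      (mem_QS_iff_mul_self.1 hK.1) hIJ hpJ
  refine LeftHolomorphicOn.eqOn_of_isPreconnected_of_eq_on_real (mem_QS_iff_mul_self.1 hK.1)
    hW.connectedComponentIn isPreconnected_connectedComponentIn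
    (hol hK.1 fun z hz => (hUW hz).2) hpK (fun z _ hz => ?_) hγ0 hγ.2 hγ1
  simp [p, stemPair, PsiI_eq_of_im_eq_zero hz K I, PsiI_eq_of_im_eq_zero hz J I]

theorem exists_stem_value (hΩ : sliceOpen n Ω) (hf : SliceRegular n Ω f) (hγ : γ ∈ PathsC n) :
    ∃ p : ℍ × ℍ, ∀ K ∈ sliceUnits n Ω γ, f (PsiI n K (γ 1)) = p.1 + K * p.2 := by
  rcases (sliceUnits n Ω γ).subsingleton_or_nontrivial with hS | ⟨I, hI, J, hJ, hIJ⟩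
  · rcases hS.eq_empty_or_singleton with hS | ⟨I, hS⟩
    · simp [hS]
    · exact ⟨(f (PsiI n I (γ 1)), 0), by simp [hS]⟩
  · exact ⟨_, fun K hK => hf.eq_stemPair hΩ hγ hI hJ hK hIJ⟩

end SliceRegular

theorem statement14 (n : ℕ) (hn : 1 ≤ n) (Ω : Set (Fin n → ℍ)) (hΩ : sliceOpen n Ω)
    (f : (Fin n → ℍ) → ℍ) (hf : SliceRegular n Ω f) :
    PathSliceFn n Ω f := by
  choose! F hF using fun γ (hγ : γ ∈ PathsC n) => hf.exists_stem_value hΩ hγ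
  exact ⟨F, fun γ hγ => hF γ hγ.1⟩
end
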